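/- arXiv:2602.21152 — 2 statements merged into one kernel-verified Lean document; each statement's English description precedes it below -/
import Mathlib

section
/- Let R be a commutative ring and x ∈ R. Let C₀, C₁, C₂ be cochain complexes of R-modules, let f : C₀ ⟶ C₁ and g : C₁ ⟶ C₂ be chain maps, and let h : C₀ ⟶ C₂ be a chain map that is chain homotopic to g ∘ f. Suppose there are positive integers a and b such that multiplication by x^a annihilates H^n(cone(f)) for every n and multiplication by x^b annihilates H^n(cone(g)) for every n. Then multiplication by x^{a+b} annihilates H^n(cone(h)) for every n. -/
open CategoryTheory

/-- If `h : C₀ ⟶ C₂` is chain homotopic to `g ∘ f`, and the homology of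
`cone(f)` is annihilated by `x^a` and that of `cone(g)` by `x^b`, then the homology of
`cone(h)` is annihilated by `x^(a+b)`. -/
theorem cone_of_composition_torsion (R : Type) [CommRing R] (x : R)
    (C₀ C₁ C₂ : CochainComplex (ModuleCat R) ℤ)
    (f : C₀ ⟶ C₁) (g : C₁ ⟶ C₂) (h : C₀ ⟶ C₂)
    (H : Homotopy h (f ≫ g)) (a b : ℕ) (ha : 0 < a) (hb : 0 < b)
    (hfa : ∀ (n : ℤ) (m : (CochainComplex.mappingCone f).homology n), x ^ a • m = 0)
    (hgb : ∀ (n : ℤ) (m : (CochainComplex.mappingCone g).homology n), x ^ b • m = 0) :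
    ∀ (n : ℤ) (m : (CochainComplex.mappingCone h).homology n), x ^ (a + b) • m = 0 := by
  intro n m
  let Q := HomotopyCategory.quotient (ModuleCat R) (ComplexShape.up ℤ)
  let F := HomotopyCategory.homologyFunctor (ModuleCat R) (ComplexShape.up ℤ) n
  let e := fun K : CochainComplex (ModuleCat R) ℤ =>
    (HomotopyCategory.homologyFunctorFactors (ModuleCat R) (ComplexShape.up ℤ) n).app K
  have comm : Q.map f ≫ Q.map g = Q.map h := by
    rw [← Q.map_comp]
    exact (HomotopyCategory.eq_of_homotopy _ _ H).symm
  let O := Triangulated.someOctahedron comm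
    (HomotopyCategory.mappingCone_triangleh_distinguished f)
    (HomotopyCategory.mappingCone_triangleh_distinguished g)
    (HomotopyCategory.mappingCone_triangleh_distinguished h)
  have ex := F.map_distinguished_exact _ O.mem
  have key : ∀ (S : ShortComplex (ModuleCat R)), S.Exact → (∀ y : S.X₁, x ^ a • y = 0) →
      (∀ y : S.X₃, x ^ b • y = 0) → ∀ y : S.X₂, x ^ (a + b) • y = 0 := by
    intro S hS h1 h3 y
    obtain ⟨z, hz⟩ := (ShortComplex.moduleCat_exact_iff S).1 hS (x ^ b • y)
      (by rw [map_smul, h3])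
    rw [pow_add, mul_smul, ← hz, ← map_smul, h1, map_zero]
  have tr : ∀ (A B : ModuleCat R) (i : A ≅ B) (r : R), (∀ y : B, r • y = 0) →
      ∀ y : A, r • y = 0 := by
    intro A B i r hr y
    apply i.toLinearEquiv.injective
    rw [map_smul, hr, map_zero]
  exact tr _ _ (e _).symm _ (key _ ex (tr _ _ (e (CochainComplex.mappingCone f)) _ (hfa n))
    (tr _ _ (e (CochainComplex.mappingCone g)) _ (hgb n))) m
end

section
/- Let p be a prime number. For every natural number n, the group cohomology H^n(G, M) of the cyclic group G = ℤ/pℤ with coefficients in the trivial G-module M = 𝔽_p = ℤ/pℤ is a one-dimensional vector space over 𝔽_p. -/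
open CategoryTheory in
theorem zmodp_aux (p : ℕ) (hp : p.Prime) (S : ShortComplex (ModuleCat (ZMod p)))
    (e : Nonempty (S.X₂ ≅ ModuleCat.of (ZMod p) (ZMod p))) (hf : S.f = 0) (hg : S.g = 0) :
    Module.finrank (ZMod p) S.homology = 1 := by
  have : Fact p.Prime := ⟨hp⟩
  obtain ⟨e⟩ := e
  have i := (ShortComplex.HomologyData.ofZeros S hf hg).left.homologyIso ≪≫ e
  rw [i.toLinearEquiv.finrank_eq]
  exact Module.finrank_self _

theorem zmodp_norm (p : ℕ) [Fact p.Prime] (x : ZMod p) :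
    (Rep.trivial (ZMod p) (Multiplicative (ZMod p)) (ZMod p)).norm.hom.toLinearMap x = 0 := by
  have : (Rep.trivial (ZMod p) (Multiplicative (ZMod p)) (ZMod p)).ρ.norm x = 0 := by
    simp [Representation.norm]
  exact this

open CategoryTheory in
theorem zmodp_sub (p : ℕ) [Fact p.Prime] (g : Multiplicative (ZMod p)) (x : ZMod p) :
    (Rep.applyAsHom (Rep.trivial (ZMod p) (Multiplicative (ZMod p)) (ZMod p)) g - 𝟙 _).hom.toLinearMap x = 0 := by
  simp [Rep.sub_hom]
  exact sub_self x

/-- For a prime `p`, the group cohomology `H^n(ℤ/pℤ, 𝔽_p)` of the cyclic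
group of order `p` with coefficients in the trivial module `𝔽_p` is one-dimensional over
`𝔽_p` for every `n`. -/
theorem groupCohomology_zmod_p_trivial_finrank (p : ℕ) (hp : p.Prime) (n : ℕ) :
    Module.finrank (ZMod p)
      (groupCohomology (Rep.trivial (ZMod p) (Multiplicative (ZMod p)) (ZMod p)) n) = 1 := by
  have : Fact p.Prime := ⟨hp⟩
  have hg : ∀ x : Multiplicative (ZMod p),
      x ∈ Subgroup.zpowers (Multiplicative.ofAdd (1 : ZMod p)) := by
    intro x
    refine Subgroup.mem_zpowers_iff.2 ⟨(x.toAdd.val : ℤ), ?_⟩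
    rw [← ofAdd_zsmul]
    apply Multiplicative.toAdd.injective
    simp
  rcases Nat.even_or_odd n with h | h
  · rcases Nat.eq_zero_or_pos n with rfl | h0
    · rw [(groupCohomology.H0Iso _).toLinearEquiv.finrank_eq]
      have : (Rep.trivial (ZMod p) (Multiplicative (ZMod p)) (ZMod p)).ρ.invariants = ⊤ := by
        ext x
        simp [Representation.mem_invariants]
      refine (LinearEquiv.finrank_eq (LinearEquiv.ofTop _ this)).trans ?_
      exact Module.finrank_self _
    · have : NeZero n := ⟨h0.ne'⟩
      rw [(Rep.FiniteCyclicGroup.groupCohomologyIsoEven _ _ hg n h).toLinearEquiv.finrank_eq]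
      apply zmodp_aux p hp _ ⟨CategoryTheory.Iso.refl _⟩
      · refine ModuleCat.hom_ext (LinearMap.ext fun x => ?_)
        exact zmodp_norm p x
      · refine ModuleCat.hom_ext (LinearMap.ext fun x => ?_)
        exact zmodp_sub p _ x
  · rw [(Rep.FiniteCyclicGroup.groupCohomologyIsoOdd _ _ hg n h).toLinearEquiv.finrank_eq]
    apply zmodp_aux p hp _ ⟨CategoryTheory.Iso.refl _⟩
    · refine ModuleCat.hom_ext (LinearMap.ext fun x => ?_)
      exact zmodp_sub p _ x
    · refine ModuleCat.hom_ext (LinearMap.ext fun x => ?_)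
      exact zmodp_norm p x
end
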